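/- arXiv:1910.03541 — 2 statements merged into one kernel-verified Lean document; each statement's English description precedes it below -/
import Mathlib

section
/- Let c ∈ (0,1). There exist constants ε₀ ∈ (0,1), δ ∈ (0,1), α ∈ (0,1), and C > 0 depending only on c with the following property. Let u be continuous and convex on Q̄ ∩ closure(B₁), twice continuously differentiable on Q ∩ B₁, and let f : Q ∩ B₁ → ℝ and φ : ∂Q ∩ B₁ → ℝ be such that u₁₁u₂₂ − u₁₂² = f in Q ∩ B₁ and u = φ on ∂Q ∩ B₁. If |u(x) − P_c^+(x)| ≤ ε₀ and |f(x) − c| ≤ δε₀|x|^α for all x ∈ Q ∩ B₁, and |φ(x) − q(x)| ≤ δε₀|x|^{2+α} for all x ∈ ∂Q ∩ B₁, then |u(x) − P_c^+(x)| ≤ C ε₀ |x|^{2+α} for all x ∈ Q ∩ B₁. -/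
/-!
The proof is a direct comparison with explicit barriers.

Put `s = √(1-c)`. The linearization of `det D²` at `P_c^+` is `L = ∂₁₁ + ∂₂₂ - 2s ∂₁₂`. Because
`s > 0`, there is a quadratic form, `p = x₁² + x₂² + 2b x₁x₂` with `b = 2/s` (`barQ`), that
satisfies `p ≥ |x|²` on the closed quadrant and `L p = -4`. Raising `p` to a power slightly above
one keeps it a supersolution: `w = p^{1+α/2}` with `α = 1/(4b²)` is comparable to `|x|^{2+α}` and
satisfies `L w ≤ -3|x|^α` (`barrier_estimates`).

For small `ε₀` the quadratic error `ε₀² det D²w` is absorbed by the linear term, so in the truncated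
quadrant `det D²(P_c^+ + ε₀ w) < f < det D²(P_c^+ - ε₀ w)` (`det_barrier`). On the boundary
`|u - P_c^+| ≤ ε₀ w` (`boundary_estimate`). If `u - (P_c^+ + ε₀ w)` had an interior local maximum,
then `0 ≤ D²u ≤ D²(P_c^+ + ε₀ w)` there, by convexity of `u`, and monotonicity of the determinant
(`det_mono`) would contradict the equation. The lower barrier is treated in the same way, its
Hessian being positive definite. Hence `|u - P_c^+| ≤ ε₀ w` everywhere.

Hessians are only ever tested along lines, through the notion `HasSnd` of a second derivative at
`0` of a function of one variable.
-/


noncomputable section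

open Set Metric

/-- The Euclidean plane ℝ². -/
abbrev E2 : Type := EuclideanSpace ℝ (Fin 2)

/-- First partial derivative ∂_i. -/
def pd (i : Fin 2) (f : E2 → ℝ) : E2 → ℝ := fun x => fderiv ℝ f x (EuclideanSpace.single i 1)

/-- Second partial derivative ∂_i ∂_j. -/
def pd2 (i j : Fin 2) (f : E2 → ℝ) : E2 → ℝ := pd i (pd j f)

/-- The open first quadrant Q. -/
def Qset : Set E2 := {x | 0 < x 0 ∧ 0 < x 1}

/-- q(x) = |x|²/2. -/
def qfun (x : E2) : ℝ := ‖x‖ ^ 2 / 2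

/-- The Monge–Ampère operator det D²u = u₁₁ u₂₂ − u₁₂². -/
def MA (u : E2 → ℝ) (x : E2) : ℝ := pd2 0 0 u x * pd2 1 1 u x - (pd2 0 1 u x) ^ 2

/-- P_c^+(x) = ½x₁² + ½x₂² + √(1−c) x₁x₂. -/
def Pplus (c : ℝ) (x : E2) : ℝ := x 0 ^ 2 / 2 + x 1 ^ 2 / 2 + Real.sqrt (1 - c) * (x 0 * x 1)

/-- P_c^-(x) = ½x₁² + ½x₂² − √(1−c) x₁x₂. -/
def Pminus (c : ℝ) (x : E2) : ℝ := x 0 ^ 2 / 2 + x 1 ^ 2 / 2 - Real.sqrt (1 - c) * (x 0 * x 1)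

/-- β_c^- = π / arccos(−√(1−c)). -/
def betam (c : ℝ) : ℝ := Real.pi / Real.arccos (-(Real.sqrt (1 - c)))

/-- A global solution (without the sign condition u ≥ 0): u is continuous and convex on Q̄,
smooth in Q, its first and second partial derivatives extend continuously to Q̄ \ {0},
det D²u = c in Q, and u = q on ∂Q. -/
structure IsGlobalSolutionNS (c : ℝ) (u : E2 → ℝ) : Prop where
  cont : ContinuousOn u (closure Qset)
  conv : ConvexOn ℝ (closure Qset) u
  smooth : ContDiffOn ℝ (⊤ : ℕ∞) u Qset
  ext1 : ∀ i : Fin 2, ∃ g : E2 → ℝ, ContinuousOn g (closure Qset \ {0}) ∧ ∀ x ∈ Qset, g x = pd i u x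
  ext2 : ∀ i j : Fin 2, ∃ g : E2 → ℝ, ContinuousOn g (closure Qset \ {0}) ∧ ∀ x ∈ Qset, g x = pd2 i j u x
  ma : ∀ x ∈ Qset, MA u x = c
  bdry : ∀ x ∈ frontier Qset, u x = qfun x

/-- A global solution: additionally u ≥ 0 on Q̄. -/
structure IsGlobalSolution (c : ℝ) (u : E2 → ℝ) extends IsGlobalSolutionNS c u : Prop where
  nonneg : ∀ x ∈ closure Qset, 0 ≤ u x

open Filter Topology

/-! ### Second derivatives along lines -/

/-- `g` is differentiable near `0` and its derivative has derivative `a` at `0`; that is,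
`g''(0) = a`. -/
def HasSnd (g : ℝ → ℝ) (a : ℝ) : Prop :=
  ∃ g' : ℝ → ℝ, (∀ᶠ t in 𝓝 0, HasDerivAt g (g' t) t) ∧ HasDerivAt g' a 0

lemma HasSnd.add {g h : ℝ → ℝ} {a b : ℝ} (hg : HasSnd g a) (hh : HasSnd h b) :
    HasSnd (fun t => g t + h t) (a + b) := by
  obtain ⟨g', h1, h2⟩ := hg
  obtain ⟨h', h3, h4⟩ := hh
  refine ⟨fun t => g' t + h' t, ?_, h2.add h4⟩
  filter_upwards [h1, h3] with t ht ht'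
  exact ht.add ht'

lemma HasSnd.const_mul {g : ℝ → ℝ} {a : ℝ} (hg : HasSnd g a) (r : ℝ) :
    HasSnd (fun t => r * g t) (r * a) := by
  obtain ⟨g', h1, h2⟩ := hg
  refine ⟨fun t => r * g' t, ?_, h2.const_mul r⟩
  filter_upwards [h1] with t ht
  exact ht.const_mul r

lemma HasSnd.sub {g h : ℝ → ℝ} {a b : ℝ} (hg : HasSnd g a) (hh : HasSnd h b) :
    HasSnd (fun t => g t - h t) (a - b) := by
  simpa [sub_eq_add_neg] using hg.add (hh.const_mul (-1))

lemma HasSnd.comp_neg {g : ℝ → ℝ} {a : ℝ} (hg : HasSnd g a) :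
    HasSnd (fun t => g (-t)) a := by
  obtain ⟨g', h1, h2⟩ := hg
  have hn : Tendsto (fun t : ℝ => -t) (𝓝 0) (𝓝 0) := by
    simpa using (continuous_neg (G := ℝ)).tendsto 0
  refine ⟨fun t => -g' (-t), ?_, ?_⟩
  · filter_upwards [hn.eventually h1] with t ht
    exact (ht.scomp t (hasDerivAt_neg t)).congr_deriv (by simp)
  · have h2' : HasDerivAt g' a (-0) := by simpa using h2
    exact (h2'.scomp (0 : ℝ) (hasDerivAt_neg (0 : ℝ))).neg.congr_deriv (by simp)

lemma HasSnd.nonpos_of_isLocalMax {g : ℝ → ℝ} {a : ℝ} (hg : HasSnd g a)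
    (hm : IsLocalMax g 0) : a ≤ 0 := by
  obtain ⟨g', h1, h2⟩ := hg
  by_contra! ha
  have hd : deriv g =ᶠ[𝓝 0] g' := h1.mono fun t ht => ht.deriv
  have hdd : deriv (deriv g) 0 = a := by rw [hd.deriv_eq, h2.deriv]
  have hmin : IsLocalMin g 0 := isLocalMin_of_deriv_deriv_pos (by rw [hdd]; exact ha)
    hm.deriv_eq_zero h1.self_of_nhds.continuousAt
  -- A simultaneous local maximum and minimum makes `g` locally constant, so `a = 0`.
  have hc : g =ᶠ[𝓝 0] fun _ => g 0 := by
    filter_upwards [hm, hmin] with t h3 h4 using le_antisymm h3 h4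
  have h0 : deriv g =ᶠ[𝓝 0] fun _ => 0 := by
    simpa using hc.deriv
  rw [h0.deriv_eq] at hdd
  simp at hdd
  exact ha.ne hdd

lemma hasDerivAt_quadratic (A B C t : ℝ) :
    HasDerivAt (fun t => A + B * t + C * t ^ 2) (B + 2 * C * t) t := by
  have := (((hasDerivAt_id t).const_mul B).const_add A).add
    (((hasDerivAt_id t).pow 2).const_mul C)
  exact this.congr_deriv (by simp; ring)

lemma hasSnd_quadratic (A B C : ℝ) : HasSnd (fun t => A + B * t + C * t ^ 2) (2 * C) := by
  refine ⟨fun t => B + 2 * C * t, Eventually.of_forall (hasDerivAt_quadratic A B C), ?_⟩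
  exact (((hasDerivAt_id (0 : ℝ)).const_mul (2 * C)).const_add B).congr_deriv (by simp)

lemma hasSnd_quadratic_rpow (A B C β : ℝ) (hA : 0 < A) :
    HasSnd (fun t => (A + B * t + C * t ^ 2) ^ β)
      (β * A ^ (β - 1) * (2 * C + (β - 1) * (B * B / A))) := by
  have hq := hasDerivAt_quadratic A B C
  have hpos : ∀ᶠ t in 𝓝 (0 : ℝ), 0 < A + B * t + C * t ^ 2 :=
    (hq 0).continuousAt.eventually (lt_mem_nhds (by simpa using hA))
  refine ⟨fun t => (B + 2 * C * t) * β * (A + B * t + C * t ^ 2) ^ (β - 1), ?_, ?_⟩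
  · filter_upwards [hpos] with t ht
    exact (hq t).rpow_const (Or.inl ht.ne')
  · have h1 : HasDerivAt (fun t : ℝ => (B + 2 * C * t) * β) (2 * C * β) 0 := by
      exact ((((hasDerivAt_id (0 : ℝ)).const_mul (2 * C)).const_add B).mul_const β).congr_deriv
        (by simp)
    have h2 := (hq 0).rpow_const (p := β - 1) (Or.inl (by simpa using hA.ne'))
    refine (h1.mul h2).congr_deriv ?_
    simp only [mul_zero, add_zero, ne_eq, OfNat.ofNat_ne_zero, not_false_eq_true, zero_pow]
    rw [Real.rpow_sub_one hA.ne' (β - 1)]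
    field_simp

/-- The quadratic form of the symmetric matrix `[[A, B], [B, C]]` evaluated at `d`. -/
def quadForm (A B C : ℝ) (d : E2) : ℝ := A * d 0 ^ 2 + 2 * B * (d 0 * d 1) + C * d 1 ^ 2

lemma hasSnd_line {u : E2 → ℝ} {x : E2} (hu : ContDiffAt ℝ 2 u x) (d : E2) :
    HasSnd (fun t : ℝ => u (x + t • d))
      (quadForm (pd2 0 0 u x) (pd2 0 1 u x) (pd2 1 1 u x) d) := by
  have hF : DifferentiableAt ℝ (fderiv ℝ u) x :=
    (hu.fderiv_right (m := 1) (by norm_num)).differentiableAt (by norm_num)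
  have hpd : ∀ i j, pd2 i j u x
      = fderiv ℝ (fderiv ℝ u) x (EuclideanSpace.single i 1) (EuclideanSpace.single j 1) := by
    intro i j
    have : HasFDerivAt (pd j u) _ x :=
      hF.hasFDerivAt.clm_apply (hasFDerivAt_const (EuclideanSpace.single j (1 : ℝ)) x)
    rw [pd2, pd, this.fderiv]
    simp
  have hsymm := hu.isSymmSndFDerivAt (by simp)
  have hl : ∀ t : ℝ, HasDerivAt (fun t : ℝ => x + t • d) d t := fun t => by
    simpa using ((hasDerivAt_id t).smul_const d).const_add x
  have hl0 : Tendsto (fun t : ℝ => x + t • d) (𝓝 0) (𝓝 x) := by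
    simpa using (hl 0).continuousAt.tendsto
  have hev : ∀ᶠ y in 𝓝 x, DifferentiableAt ℝ u y :=
    (hu.eventually (by simp)).mono fun y hy => hy.differentiableAt (by norm_num)
  refine ⟨fun t => fderiv ℝ u (x + t • d) d, ?_, ?_⟩
  · filter_upwards [hl0.eventually hev] with t ht
    exact ht.hasFDerivAt.comp_hasDerivAt t (hl t)
  · have hd : d = d 0 • EuclideanSpace.single 0 1 + d 1 • EuclideanSpace.single 1 1 := by
      ext i; fin_cases i <;> simp
    have h1 : HasFDerivAt (fderiv ℝ u) (fderiv ℝ (fderiv ℝ u) x) (x + (0 : ℝ) • d) := by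
      simpa using hF.hasFDerivAt
    have h2 : HasDerivAt (fun t : ℝ => fderiv ℝ u (x + t • d)) (fderiv ℝ (fderiv ℝ u) x d) 0 :=
      h1.comp_hasDerivAt (0 : ℝ) (hl 0)
    have h5 : HasDerivAt (fun t : ℝ => fderiv ℝ u (x + t • d) d)
        (fderiv ℝ (fderiv ℝ u) x d d) 0 :=
      (ContinuousLinearMap.apply ℝ ℝ d).hasFDerivAt.comp_hasDerivAt (0 : ℝ) h2
    refine h5.congr_deriv ?_
    rw [quadForm, hpd, hpd, hpd]
    have h3 := hsymm (EuclideanSpace.single 0 1) (EuclideanSpace.single 1 1)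
    generalize fderiv ℝ (fderiv ℝ u) x = T at *
    have h4 : T d d = T (d 0 • EuclideanSpace.single 0 1 + d 1 • EuclideanSpace.single 1 1)
      (d 0 • EuclideanSpace.single 0 1 + d 1 • EuclideanSpace.single 1 1) := by rw [← hd]
    rw [h4]
    simp only [map_add, map_smul, add_apply, smul_apply,
      smul_eq_mul, h3]
    ring

/-! ### Monotonicity of the determinant -/

lemma sq_le_of_quadForm_nonneg {A B C : ℝ} (h : ∀ d, 0 ≤ quadForm A B C d) :
    B ^ 2 ≤ A * C := by
  have := discrim_le_zero (a := A) (b := 2 * B) (c := C) fun t => by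
    have := h !₂[t, 1]
    simp [quadForm] at this
    nlinarith
  rw [discrim] at this
  linarith

/-- The determinant is monotone on positive semidefinite `2 × 2` matrices:
`det (A + D) = det A + det D + (A₁₁D₂₂ + A₂₂D₁₁ - 2A₁₂D₁₂)`, and each term is nonnegative when
`A` and `D` are positive semidefinite. -/
lemma det_mono {A B C A' B' C' : ℝ} (h : ∀ d, 0 ≤ quadForm A B C d)
    (h' : ∀ d, quadForm A B C d ≤ quadForm A' B' C' d) :
    A * C - B ^ 2 ≤ A' * C' - B' ^ 2 := by
  have hD : ∀ d, 0 ≤ quadForm (A' - A) (B' - B) (C' - C) d := fun d => by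
    have := h' d
    simp only [quadForm] at *
    linarith
  have e1 := sq_le_of_quadForm_nonneg h
  have e2 := sq_le_of_quadForm_nonneg hD
  have hA : 0 ≤ A := by simpa [quadForm] using h !₂[1, 0]
  have hC : 0 ≤ C := by simpa [quadForm] using h !₂[0, 1]
  have hA' : 0 ≤ A' - A := by simpa [quadForm] using hD !₂[1, 0]
  have hC' : 0 ≤ C' - C := by simpa [quadForm] using hD !₂[0, 1]
  set D := A' - A
  set E := B' - B
  set F := C' - C
  have key : |2 * (B * E)| ≤ A * F + C * D := by
    apply abs_le_of_sq_le_sq _ (by positivity)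
    have : B ^ 2 * E ^ 2 ≤ (A * C) * (D * F) := mul_le_mul e1 e2 (sq_nonneg _) (by positivity)
    nlinarith [sq_nonneg (A * F - C * D)]
  have := (abs_le.1 key).2
  have hA'' : A' = A + D := by simp [D]
  have hB'' : B' = B + E := by simp [E]
  have hC'' : C' = C + F := by simp [F]
  rw [hA'', hB'', hC'']
  nlinarith

/-! ### The barrier -/

/-- The quadratic form `x₁² + x₂² + 2b x₁x₂`. With `b = 2/s`, `s = √(1-c)`, it is strictly
superharmonic for the linearized operator `∂₁₁ + ∂₂₂ - 2s ∂₁₂`, and it is at least `|x|²` on the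
closed quadrant. -/
def barQ (b : ℝ) (x : E2) : ℝ := x 0 ^ 2 + x 1 ^ 2 + 2 * b * (x 0 * x 1)

/-- The barrier `P_c^+ + σ (x₁² + x₂² + 2b x₁x₂)^β`, used with `σ = ±ε₀`. -/
def barrier (c b β σ : ℝ) (x : E2) : ℝ := Pplus c x + σ * barQ b x ^ β

lemma norm_sq_eq (x : E2) : ‖x‖ ^ 2 = x 0 ^ 2 + x 1 ^ 2 := by
  simp [EuclideanSpace.norm_sq_eq, Fin.sum_univ_two]

lemma norm_sq_le_barQ {b : ℝ} (hb : 0 ≤ b) {x : E2} (h0 : 0 ≤ x 0) (h1 : 0 ≤ x 1) :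
    ‖x‖ ^ 2 ≤ barQ b x := by
  rw [norm_sq_eq, barQ]
  have : 0 ≤ 2 * b * (x 0 * x 1) := by positivity
  linarith

lemma barQ_le {b : ℝ} (hb : 0 ≤ b) (x : E2) : barQ b x ≤ (1 + b) * ‖x‖ ^ 2 := by
  rw [norm_sq_eq, barQ]
  nlinarith [mul_nonneg hb (sq_nonneg (x 0 - x 1))]

lemma norm_rpow_eq (x : E2) (r : ℝ) : (‖x‖ ^ 2) ^ r = ‖x‖ ^ (2 * r) := by
  rw [← Real.rpow_natCast, ← Real.rpow_mul (norm_nonneg x)]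
  norm_num

/-- The Hessian of the barrier, tested along lines. -/
lemma hasSnd_barrier (c b β σ : ℝ) {x : E2} (hx : 0 < barQ b x) (d : E2) :
    HasSnd (fun t : ℝ => barrier c b β σ (x + t • d))
      (quadForm
        (1 + σ * (β * barQ b x ^ (β - 1) *
          (2 + (β - 1) * ((2 * (x 0 + b * x 1)) ^ 2 / barQ b x))))
        (√(1 - c) + σ * (β * barQ b x ^ (β - 1) *
          (2 * b + (β - 1) * (2 * (x 0 + b * x 1) * (2 * (x 1 + b * x 0)) / barQ b x))))
        (1 + σ * (β * barQ b x ^ (β - 1) *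
          (2 + (β - 1) * ((2 * (x 1 + b * x 0)) ^ 2 / barQ b x)))) d) := by
  have h1 := hasSnd_quadratic (Pplus c x)
    (x 0 * d 0 + x 1 * d 1 + √(1 - c) * (x 0 * d 1 + x 1 * d 0))
    (d 0 ^ 2 / 2 + d 1 ^ 2 / 2 + √(1 - c) * (d 0 * d 1))
  have h2 := (hasSnd_quadratic_rpow (barQ b x)
    (2 * x 0 * d 0 + 2 * x 1 * d 1 + 2 * b * (x 0 * d 1 + x 1 * d 0))
    (d 0 ^ 2 + d 1 ^ 2 + 2 * b * (d 0 * d 1)) β hx).const_mul σ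
  convert h1.add h2 using 1
  · ext t
    have e1 : Pplus c (x + t • d) = Pplus c x
        + (x 0 * d 0 + x 1 * d 1 + √(1 - c) * (x 0 * d 1 + x 1 * d 0)) * t
        + (d 0 ^ 2 / 2 + d 1 ^ 2 / 2 + √(1 - c) * (d 0 * d 1)) * t ^ 2 := by
      simp [Pplus]; ring
    have e2 : barQ b (x + t • d) = barQ b x
        + (2 * x 0 * d 0 + 2 * x 1 * d 1 + 2 * b * (x 0 * d 1 + x 1 * d 0)) * t
        + (d 0 ^ 2 + d 1 ^ 2 + 2 * b * (d 0 * d 1)) * t ^ 2 := by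
      simp [barQ]; ring
    rw [barrier, e1, e2]
  · rw [quadForm]
    field_simp
    ring

/-- The Hessian of the barrier at `x` is that of `P_c^+` plus `σ m h`, where `m ≥ |x|^α` and the
symmetric matrix `h` is bounded and satisfies `h₁₁ + h₂₂ - 2s h₁₂ ≤ -3`. The quadratic form `barQ`
contributes `4 - 4sb = -4` to this trace, and the exponent `β = 1 + α/2` is so close to `1` that
the gradient terms contribute at most `1`. -/
lemma barrier_estimates {c b : ℝ} (hb : 2 ≤ b) (hsb : √(1 - c) * b = 2)
    {x : E2} (hx : x ∈ Qset) (hx1 : ‖x‖ ≤ 1) :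
    ∃ m h₀ h₁ h₂ : ℝ, ‖x‖ ^ (1 / (4 * b ^ 2)) ≤ m ∧ m ≤ 2 * (1 + b) ∧
      h₀ ∈ Icc 2 (5 / 2) ∧ h₂ ∈ Icc 2 (5 / 2) ∧ h₁ ∈ Icc (2 * b) (2 * b + 1 / 2) ∧
      h₀ + h₂ - 2 * √(1 - c) * h₁ ≤ -3 ∧
      ∀ σ d, HasSnd (fun t : ℝ => barrier c b (1 + 1 / (4 * b ^ 2) / 2) σ (x + t • d))
        (quadForm (1 + σ * (m * h₀)) (√(1 - c) + σ * (m * h₁)) (1 + σ * (m * h₂)) d) := by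
  obtain ⟨h0, h1⟩ := hx
  have hn : 0 < ‖x‖ ^ 2 := by rw [norm_sq_eq]; positivity
  have ha := norm_sq_le_barQ (b := b) (by linarith) h0.le h1.le
  have hap : 0 < barQ b x := hn.trans_le ha
  have ha1 : barQ b x ≤ 1 + b := (barQ_le (by linarith) x).trans <|
    mul_le_of_le_one_right (by linarith) (pow_le_one₀ (norm_nonneg x) hx1)
  set α : ℝ := 1 / (4 * b ^ 2) with hα
  have hα0 : 0 < α := by positivity
  have hα1 : α ≤ 1 := by
    rw [hα, div_le_one (by positivity)]; nlinarith
  have hαb : α * (4 * b ^ 2) = 1 := by rw [hα]; field_simp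
  have hβ : 1 + α / 2 - 1 = α / 2 := by ring
  have hp0 : 0 ≤ x 0 * x 1 := by positivity
  have t0 : (2 * (x 0 + b * x 1)) ^ 2 / barQ b x ∈ Icc 0 (4 * b ^ 2) := by
    refine ⟨by positivity, ?_⟩
    rw [div_le_iff₀ hap, barQ]
    nlinarith [mul_nonneg (by nlinarith : (0 : ℝ) ≤ b ^ 2 - 1) (sq_nonneg (x 0)),
      mul_nonneg (by nlinarith : (0 : ℝ) ≤ b * (b ^ 2 - 1)) hp0]
  have t2 : (2 * (x 1 + b * x 0)) ^ 2 / barQ b x ∈ Icc 0 (4 * b ^ 2) := by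
    refine ⟨by positivity, ?_⟩
    rw [div_le_iff₀ hap, barQ]
    nlinarith [mul_nonneg (by nlinarith : (0 : ℝ) ≤ b ^ 2 - 1) (sq_nonneg (x 1)),
      mul_nonneg (by nlinarith : (0 : ℝ) ≤ b * (b ^ 2 - 1)) hp0]
  have t1 : 2 * (x 0 + b * x 1) * (2 * (x 1 + b * x 0)) / barQ b x ∈ Icc 0 (4 * b ^ 2) := by
    refine ⟨by positivity, ?_⟩
    have h3 := t0.2
    have h4 := t2.2
    rw [div_le_iff₀ hap] at *
    nlinarith [sq_nonneg (2 * (x 0 + b * x 1) - 2 * (x 1 + b * x 0))]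
  have key : ∀ {k t : ℝ}, t ∈ Icc 0 (4 * b ^ 2) → k + α / 2 * t ∈ Icc k (k + 1 / 2) := by
    intro k t ht
    have := mul_le_mul_of_nonneg_left ht.2 hα0.le
    have := mul_nonneg hα0.le ht.1
    constructor <;> linarith
  have k0 := key (k := 2) t0
  have k1 := key (k := 2 * b) t1
  have k2 := key (k := 2) t2
  refine ⟨(1 + α / 2) * barQ b x ^ (α / 2), _, _, _, ?_, ?_, ⟨k0.1, k0.2.trans (by norm_num)⟩,
    ⟨k2.1, k2.2.trans (by norm_num)⟩, k1, ?_, fun σ d => ?_⟩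
  · have e1 : ‖x‖ ^ α ≤ barQ b x ^ (α / 2) := by
      have := Real.rpow_le_rpow hn.le ha (by positivity : 0 ≤ α / 2)
      rwa [norm_rpow_eq, mul_div_cancel₀ _ (two_ne_zero)] at this
    have : 0 ≤ α / 2 * barQ b x ^ (α / 2) := by positivity
    linarith
  · have e1 : barQ b x ^ (α / 2) ≤ 1 + b :=
      calc barQ b x ^ (α / 2) ≤ (1 + b) ^ (α / 2) := Real.rpow_le_rpow hap.le ha1 (by positivity)
        _ ≤ (1 + b) ^ (1 : ℝ) := Real.rpow_le_rpow_of_exponent_le (by linarith) (by linarith)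
        _ = 1 + b := Real.rpow_one _
    exact mul_le_mul (by linarith) e1 (by positivity) (by norm_num)
  · have := mul_le_mul_of_nonneg_left k1.1 (Real.sqrt_nonneg (1 - c))
    linarith [k0.2, k2.2]
  · have := hasSnd_barrier c b (1 + α / 2) σ hap d
    rwa [hβ] at this

/-- The determinant of the Hessian of the barrier, with `k = |σ| m`: the linear term
`σm (h₁₁ + h₂₂ - 2s h₁₂)` dominates the quadratic one. -/
lemma det_barrier {s c b k h₀ h₁ h₂ : ℝ} (hs : s ^ 2 = 1 - c) (hk : 0 < k)
    (hkM : k * (2 * b + 3) ^ 2 ≤ 1) (hb : 2 ≤ b)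
    (i0 : h₀ ∈ Icc 2 (5 / 2)) (i2 : h₂ ∈ Icc 2 (5 / 2)) (i1 : h₁ ∈ Icc (2 * b) (2 * b + 1 / 2))
    (hL : h₀ + h₂ - 2 * s * h₁ ≤ -3) :
    (1 + k * h₀) * (1 + k * h₂) - (s + k * h₁) ^ 2 ≤ c - 2 * k ∧
      c + 2 * k ≤ (1 - k * h₀) * (1 - k * h₂) - (s - k * h₁) ^ 2 := by
  obtain ⟨a0, b0⟩ := i0
  obtain ⟨a1, b1⟩ := i1
  obtain ⟨a2, b2⟩ := i2
  have d1 : h₀ * h₂ - h₁ ^ 2 ≤ (2 * b + 3) ^ 2 := by nlinarith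
  have d2 : -(2 * b + 3) ^ 2 ≤ h₀ * h₂ - h₁ ^ 2 := by nlinarith
  have e1 := mul_le_mul_of_nonneg_left d1 (sq_nonneg k)
  have e2 := mul_le_mul_of_nonneg_left d2 (sq_nonneg k)
  have e3 := mul_le_mul_of_nonneg_left hkM hk.le
  have e4 := mul_le_mul_of_nonneg_left hL hk.le
  constructor <;> nlinarith

/-! ### Geometry of the truncated quadrant -/

lemma continuous_coord (i : Fin 2) : Continuous fun x : E2 => x i := by fun_prop

lemma isOpen_Qset : IsOpen Qset :=
  (isOpen_lt continuous_const (continuous_coord 0)).inter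
    (isOpen_lt continuous_const (continuous_coord 1))

lemma convex_Qset : Convex ℝ Qset := by
  intro x hx y hy a b ha hb hab
  obtain ⟨hx0, hx1⟩ := hx
  obtain ⟨hy0, hy1⟩ := hy
  rcases ha.eq_or_lt with rfl | ha
  · obtain rfl : b = 1 := by linarith
    simpa using (show y ∈ Qset from ⟨hy0, hy1⟩)
  · constructor <;> simp <;> positivity

lemma nonneg_of_mem_closure {x : E2} (hx : x ∈ closure Qset) : 0 ≤ x 0 ∧ 0 ≤ x 1 := by
  have hc : IsClosed {x : E2 | 0 ≤ x 0 ∧ 0 ≤ x 1} :=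
    (isClosed_le continuous_const (continuous_coord 0)).inter
      (isClosed_le continuous_const (continuous_coord 1))
  have hs : Qset ⊆ {x : E2 | 0 ≤ x 0 ∧ 0 ≤ x 1} := fun y hy => ⟨hy.1.le, hy.2.le⟩
  exact closure_minimal hs hc hx

/-- A boundary point `x` is a limit of interior points along the segment from `(1/2, 1/2)`. -/
lemma subset_closure_inter :
    closure Qset ∩ closure (ball (0 : E2) 1) ⊆ closure (Qset ∩ ball 0 1) := by
  rintro x ⟨hx, hx'⟩
  have he : (!₂[1 / 2, 1 / 2] : E2) ∈ Qset := by constructor <;> simp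
  have he' : (!₂[1 / 2, 1 / 2] : E2) ∈ ball (0 : E2) 1 := by
    rw [mem_ball_zero_iff]
    have := norm_sq_eq !₂[1 / 2, 1 / 2]
    norm_num at this
    nlinarith [norm_nonneg (!₂[1 / 2, 1 / 2] : E2)]
  have h1 := convex_Qset.openSegment_interior_closure_subset_interior
    (by rwa [isOpen_Qset.interior_eq]) hx
  have h2 := (convex_ball (0 : E2) 1).openSegment_interior_closure_subset_interior
    (by rwa [isOpen_ball.interior_eq]) hx'
  rw [isOpen_Qset.interior_eq] at h1
  rw [isOpen_ball.interior_eq] at h2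
  exact closure_mono (subset_inter h1 h2)
    (segment_subset_closure_openSegment (right_mem_segment ℝ _ x))

lemma inter_mem_nhds {x : E2} (hx : x ∈ Qset ∩ ball (0 : E2) 1) :
    Qset ∩ ball (0 : E2) 1 ∈ 𝓝 x :=
  (isOpen_Qset.inter isOpen_ball).mem_nhds hx

/-- If a continuous function on the closed truncated quadrant is nonpositive on its boundary and
has no interior local maximum, it is nonpositive. -/
lemma nonpos_of_no_localMax {g : E2 → ℝ}
    (hg : ContinuousOn g (closure Qset ∩ closure (ball (0 : E2) 1)))
    (hb : ∀ x ∈ closure Qset ∩ closure (ball (0 : E2) 1), x ∉ Qset ∩ ball (0 : E2) 1 → g x ≤ 0)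
    (hi : ∀ x ∈ Qset ∩ ball (0 : E2) 1, ¬ IsLocalMax g x) :
    ∀ x ∈ Qset ∩ ball (0 : E2) 1, g x ≤ 0 := by
  intro x hx
  have hsub : Qset ∩ ball (0 : E2) 1 ⊆ closure Qset ∩ closure (ball (0 : E2) 1) :=
    inter_subset_inter subset_closure subset_closure
  have hK : IsCompact (closure Qset ∩ closure (ball (0 : E2) 1)) :=
    (isBounded_ball.isCompact_closure).inter_left isClosed_closure
  obtain ⟨y, hy, hmax⟩ := hK.exists_isMaxOn ⟨x, hsub hx⟩ hg
  refine (hmax (hsub hx)).trans (hb y hy fun hyi => hi y hyi ?_)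
  exact hmax.isLocalMax (mem_of_superset (inter_mem_nhds hyi) hsub)

lemma tendsto_line (x d : E2) : Tendsto (fun t : ℝ => x + t • d) (𝓝 0) (𝓝 x) := by
  have : Continuous fun t : ℝ => x + t • d := by fun_prop
  simpa using this.tendsto 0

lemma IsLocalMax.comp_line {g : E2 → ℝ} {x : E2} (h : IsLocalMax g x) (d : E2) :
    IsLocalMax (fun t : ℝ => g (x + t • d)) 0 := by
  have := (tendsto_line x d).eventually h
  simpa [IsLocalMax, IsMaxFilter] using this

/-- The Hessian of a convex function is positive semidefinite: `t ↦ u(x+td) + u(x-td)` has a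
minimum at `0`. -/
lemma quadForm_nonneg_of_convexOn {u : E2 → ℝ} {S : Set E2} (hu : ConvexOn ℝ S u) {x : E2}
    (hS : S ∈ 𝓝 x) (hu2 : ContDiffAt ℝ 2 u x) (d : E2) :
    0 ≤ quadForm (pd2 0 0 u x) (pd2 0 1 u x) (pd2 1 1 u x) d := by
  have h1 := hasSnd_line hu2 d
  have h2 := (h1.add h1.comp_neg).const_mul (-1)
  have hn : Tendsto (fun t : ℝ => -t) (𝓝 0) (𝓝 0) := by
    simpa using (continuous_neg (G := ℝ)).tendsto 0
  have := h2.nonpos_of_isLocalMax <| by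
    filter_upwards [(tendsto_line x d).eventually hS, ((tendsto_line x d).comp hn).eventually hS]
      with t ht ht'
    have h3 := hu.2 ht ht' (by norm_num : (0 : ℝ) ≤ 1 / 2) (by norm_num : (0 : ℝ) ≤ 1 / 2)
      (by norm_num)
    have h4 : (1 / 2 : ℝ) • (x + t • d) + (1 / 2 : ℝ) • (x + (-t) • d) = x := by module
    simp only [Function.comp_apply, h4, smul_eq_mul] at h3
    simp only [neg_zero, zero_smul, add_zero]
    linarith
  linarith

lemma quadForm_le_of_isLocalMax {u v : E2 → ℝ} {x : E2} {A B C A' B' C' : ℝ}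
    (hu : ∀ d, HasSnd (fun t : ℝ => u (x + t • d)) (quadForm A B C d))
    (hv : ∀ d, HasSnd (fun t : ℝ => v (x + t • d)) (quadForm A' B' C' d))
    (h : IsLocalMax (fun y => u y - v y) x) (d : E2) :
    quadForm A B C d ≤ quadForm A' B' C' d :=
  sub_nonpos.1 (((hu d).sub (hv d)).nonpos_of_isLocalMax (h.comp_line d))

/-- On the boundary of the truncated quadrant the two barriers `P_c^+ ± ε (barQ b)^β` enclose
`u`: on the axes by the assumption on the boundary data, on the arc since `barQ b ≥ 1` there. -/
lemma boundary_estimate {c b α δ ε : ℝ} {u φ : E2 → ℝ} (hb : 0 ≤ b) (hα : 0 < α) (hδ : δ ≤ 1)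
    (hε : 0 ≤ ε)
    (hu : ContinuousOn u (closure Qset ∩ closure (ball (0 : E2) 1)))
    (hφ : ∀ x ∈ frontier Qset ∩ ball (0 : E2) 1, u x = φ x)
    (hP : ∀ x ∈ Qset ∩ ball (0 : E2) 1, |u x - Pplus c x| ≤ ε)
    (hq : ∀ x ∈ frontier Qset ∩ ball (0 : E2) 1, |φ x - qfun x| ≤ δ * ε * ‖x‖ ^ (2 + α))
    {x : E2} (hx : x ∈ closure Qset ∩ closure (ball (0 : E2) 1))
    (hx' : x ∉ Qset ∩ ball (0 : E2) 1) :
    |u x - Pplus c x| ≤ ε * barQ b x ^ (1 + α / 2) := by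
  obtain ⟨h0, h1⟩ := nonneg_of_mem_closure hx.1
  have hle := norm_sq_le_barQ hb h0 h1
  have hw : ‖x‖ ^ (2 + α) ≤ barQ b x ^ (1 + α / 2) := by
    have := Real.rpow_le_rpow (sq_nonneg ‖x‖) hle (by positivity : 0 ≤ 1 + α / 2)
    rwa [norm_rpow_eq, show 2 * (1 + α / 2) = 2 + α by ring] at this
  have hn := Real.rpow_nonneg (norm_nonneg x) (2 + α)
  by_cases hxb : x ∈ ball (0 : E2) 1
  · have hxQ : x ∉ Qset := fun h => hx' ⟨h, hxb⟩
    have hfr : x ∈ frontier Qset ∩ ball (0 : E2) 1 :=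
      ⟨⟨hx.1, by rwa [isOpen_Qset.interior_eq]⟩, hxb⟩
    have hprod : x 0 * x 1 = 0 := by
      by_contra hne
      have := mul_ne_zero_iff.1 hne
      exact hxQ ⟨lt_of_le_of_ne h0 this.1.symm, lt_of_le_of_ne h1 this.2.symm⟩
    have hPq : Pplus c x = qfun x := by
      rw [Pplus, qfun, norm_sq_eq, hprod]; ring
    rw [hφ x hfr, hPq]
    refine (hq x hfr).trans ?_
    rw [mul_assoc]
    have h2 : ε * ‖x‖ ^ (2 + α) ≤ ε * barQ b x ^ (1 + α / 2) := mul_le_mul_of_nonneg_left hw hε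
    have h3 := mul_le_of_le_one_left (mul_nonneg hε hn) hδ
    linarith
  · have hx1 : 1 ≤ ‖x‖ := by simpa using hxb
    have hPc : Continuous (Pplus c) := by unfold Pplus; fun_prop
    have hcl : closure (Qset ∩ ball (0 : E2) 1) ⊆ closure Qset ∩ closure (ball (0 : E2) 1) :=
      closure_inter_subset_inter_closure _ _
    have h2 : |u x - Pplus c x| ≤ ε :=
      le_on_closure hP ((hu.mono hcl).sub hPc.continuousOn).abs continuousOn_const
        (subset_closure_inter hx)
    have h3 : 1 ≤ ‖x‖ ^ (2 + α) := Real.one_le_rpow hx1 (by positivity)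
    have h4 := mul_le_mul_of_nonneg_left (h3.trans hw) hε
    linarith

/-- Pointwise C^{2,α} estimate at the origin for perturbations of P_c^+. -/
theorem stmt9 (c : ℝ) (hc : c ∈ Set.Ioo (0:ℝ) 1) :
    ∃ ε₀ ∈ Set.Ioo (0:ℝ) 1, ∃ δ ∈ Set.Ioo (0:ℝ) 1, ∃ α ∈ Set.Ioo (0:ℝ) 1, ∃ C > (0:ℝ),
      ∀ u f φ : E2 → ℝ,
        ContinuousOn u (closure Qset ∩ closure (ball (0:E2) 1)) →
        ConvexOn ℝ (closure Qset ∩ closure (ball (0:E2) 1)) u →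
        ContDiffOn ℝ 2 u (Qset ∩ ball (0:E2) 1) →
        (∀ x ∈ Qset ∩ ball (0:E2) 1, MA u x = f x) →
        (∀ x ∈ frontier Qset ∩ ball (0:E2) 1, u x = φ x) →
        (∀ x ∈ Qset ∩ ball (0:E2) 1, |u x - Pplus c x| ≤ ε₀) →
        (∀ x ∈ Qset ∩ ball (0:E2) 1, |f x - c| ≤ δ * ε₀ * ‖x‖ ^ α) →
        (∀ x ∈ frontier Qset ∩ ball (0:E2) 1, |φ x - qfun x| ≤ δ * ε₀ * ‖x‖ ^ (2 + α)) →
        ∀ x ∈ Qset ∩ ball (0:E2) 1, |u x - Pplus c x| ≤ C * ε₀ * ‖x‖ ^ (2 + α) := by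
  obtain ⟨hc0, hc1⟩ := hc
  set s := √(1 - c) with hs
  have hs2 : s ^ 2 = 1 - c := Real.sq_sqrt (by linarith)
  have hs0 : 0 < s := Real.sqrt_pos.2 (by linarith)
  have hs1 : s < 1 := by nlinarith
  set b := 2 / s with hbdef
  have hsb : s * b = 2 := by rw [hbdef]; field_simp
  have hb : 2 ≤ b := by rw [hbdef, le_div_iff₀ hs0]; linarith
  set α := 1 / (4 * b ^ 2) with hαdef
  have hα0 : 0 < α := by positivity
  have hα1 : α < 1 := by rw [hαdef, div_lt_one (by positivity)]; nlinarith
  set ε := 1 / (2 * (1 + b) * (2 * b + 3) ^ 2) with hεdef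
  have hε0 : 0 < ε := by positivity
  have hεM : ε * (2 * (1 + b) * (2 * b + 3) ^ 2) = 1 := by rw [hεdef]; field_simp
  have hε1 : ε < 1 := by
    rw [hεdef, div_lt_one (by positivity)]
    nlinarith [sq_nonneg b, sq_nonneg (2 * b + 3)]
  refine ⟨ε, ⟨hε0, hε1⟩, 1 / 2, by norm_num, α, ⟨hα0, hα1⟩, (1 + b) ^ (1 + α / 2),
    by positivity, ?_⟩
  intro u f φ hu hconv hC2 hMA hφ hP hf hq x hx
  have hbd := fun y hy hy' => boundary_estimate (b := b) (by linarith) hα0 (by norm_num) hε0.le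
    hu hφ hP hq (x := y) hy hy'
  have hbar : ∀ σ, Continuous (barrier c b (1 + α / 2) σ) := by
    intro σ
    have h1 : Continuous (Pplus c) := by unfold Pplus; fun_prop
    have h2 : Continuous (barQ b) := by unfold barQ; fun_prop
    exact h1.add (continuous_const.mul (h2.rpow_const fun _ => Or.inr (by positivity)))
  -- At an interior point, `k = ε m` measures the size of the Hessian perturbation.
  have hpt : ∀ y ∈ Qset ∩ ball (0 : E2) 1, ∃ k h₀ h₁ h₂ : ℝ, 0 < k ∧ |f y - c| ≤ k / 2 ∧
      k * h₀ < 1 ∧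
      (1 + k * h₀) * (1 + k * h₂) - (s + k * h₁) ^ 2 ≤ c - 2 * k ∧
      c + 2 * k ≤ (1 - k * h₀) * (1 - k * h₂) - (s - k * h₁) ^ 2 ∧
      (∀ d, HasSnd (fun t : ℝ => barrier c b (1 + α / 2) ε (y + t • d))
        (quadForm (1 + k * h₀) (s + k * h₁) (1 + k * h₂) d)) ∧
      (∀ d, HasSnd (fun t : ℝ => barrier c b (1 + α / 2) (-ε) (y + t • d))
        (quadForm (1 - k * h₀) (s - k * h₁) (1 - k * h₂) d)) := by
    intro y hy
    have hy1 : ‖y‖ ≤ 1 := (mem_ball_zero_iff.1 hy.2).le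
    have hy0 : 0 < ‖y‖ := norm_pos_iff.2 fun h => by simpa [h] using hy.1.1
    obtain ⟨m, h₀, h₁, h₂, hm1, hm2, i0, i2, i1, hL, hH⟩ := barrier_estimates hb hsb hy.1 hy1
    have hr : 0 < ‖y‖ ^ α := Real.rpow_pos_of_pos hy0 _
    have hk : 0 < ε * m := mul_pos hε0 (hr.trans_le hm1)
    have hkM : ε * m * (2 * b + 3) ^ 2 ≤ 1 := by
      rw [← hεM, mul_assoc]
      gcongr
    obtain ⟨d1, d2⟩ := det_barrier hs2 hk hkM hb i0 i2 i1 hL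
    refine ⟨ε * m, h₀, h₁, h₂, hk, ?_, ?_, d1, d2, fun d => ?_, fun d => ?_⟩
    · have := mul_le_mul_of_nonneg_left hm1 hε0.le
      have := hf y hy
      linarith
    · have := i0.2
      have := mul_le_mul_of_nonneg_left i0.2 hk.le
      nlinarith
    · simpa only [mul_assoc] using hH ε d
    · simpa only [neg_mul, ← sub_eq_add_neg, mul_assoc] using hH (-ε) d
  have hCA : ∀ y ∈ Qset ∩ ball (0 : E2) 1, ContDiffAt ℝ 2 u y := fun y hy =>
    hC2.contDiffAt (inter_mem_nhds hy)
  have hsub : Qset ∩ ball (0 : E2) 1 ⊆ closure Qset ∩ closure (ball (0 : E2) 1) :=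
    inter_subset_inter subset_closure subset_closure
  have hup := nonpos_of_no_localMax (g := fun y => u y - barrier c b (1 + α / 2) ε y)
    (hu.sub (hbar ε).continuousOn)
    (fun y hy hy' => by
      have := (abs_le.1 (hbd y hy hy')).2
      simp only [barrier]; linarith)
    (fun y hy hmax => by
      obtain ⟨k, h₀, h₁, h₂, hk, hfk, -, d1, -, H, -⟩ := hpt y hy
      have hle := quadForm_le_of_isLocalMax (hasSnd_line (hCA y hy)) H hmax
      have hdet := det_mono (quadForm_nonneg_of_convexOn hconv
        (mem_of_superset (inter_mem_nhds hy) hsub) (hCA y hy)) hle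
      have hM := hMA y hy
      rw [MA] at hM
      linarith [(abs_le.1 hfk).1])
  have hlo := nonpos_of_no_localMax (g := fun y => barrier c b (1 + α / 2) (-ε) y - u y)
    ((hbar (-ε)).continuousOn.sub hu)
    (fun y hy hy' => by
      have := (abs_le.1 (hbd y hy hy')).1
      simp only [barrier]; linarith)
    (fun y hy hmax => by
      obtain ⟨k, h₀, h₁, h₂, hk, hfk, hk1, -, d2, -, H⟩ := hpt y hy
      have hle := quadForm_le_of_isLocalMax H (hasSnd_line (hCA y hy)) hmax
      -- The Hessian of the lower barrier is positive definite: its first entry and its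
      -- determinant are positive.
      have hnn : ∀ d, 0 ≤ quadForm (1 - k * h₀) (s - k * h₁) (1 - k * h₂) d := by
        intro d
        have hA : 0 < 1 - k * h₀ := by linarith
        refine nonneg_of_mul_nonneg_right (?_ : 0 ≤ (1 - k * h₀) * _) hA
        have e : (1 - k * h₀) * quadForm (1 - k * h₀) (s - k * h₁) (1 - k * h₂) d
            = ((1 - k * h₀) * d 0 + (s - k * h₁) * d 1) ^ 2
              + ((1 - k * h₀) * (1 - k * h₂) - (s - k * h₁) ^ 2) * d 1 ^ 2 := by
          rw [quadForm]; ring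
        rw [e]
        have : 0 ≤ (1 - k * h₀) * (1 - k * h₂) - (s - k * h₁) ^ 2 := by linarith
        positivity
      have hdet := det_mono hnn hle
      have hM := hMA y hy
      rw [MA] at hM
      linarith [(abs_le.1 hfk).2])
  have hw : barQ b x ^ (1 + α / 2) ≤ (1 + b) ^ (1 + α / 2) * ‖x‖ ^ (2 + α) := by
    have h0 : 0 ≤ barQ b x :=
      (sq_nonneg _).trans (norm_sq_le_barQ (by linarith) hx.1.1.le hx.1.2.le)
    have := Real.rpow_le_rpow h0 (barQ_le (by linarith) x) (by positivity : 0 ≤ 1 + α / 2)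
    rwa [Real.mul_rpow (by linarith) (sq_nonneg _), norm_rpow_eq,
      show 2 * (1 + α / 2) = 2 + α by ring] at this
  have hw' := mul_le_mul_of_nonneg_left hw hε0.le
  have h1 := hup x hx
  have h2 := hlo x hx
  simp only [barrier] at h1 h2
  rw [abs_le]
  constructor <;> linarith
end
end

section
/- Let c ∈ (0,1), let α_c^+ := arccos(√(1−c)) ∈ (0, π/2), and let Q_c^+ be the open sector {(r cos θ, r sin θ) : r > 0, 0 < θ < α_c^+} ⊂ ℝ². There exist constants C₀ > 0 and α₀ ∈ (0,1) depending only on c with the following property: if w is continuous on closure(Q_c^+) ∩ closure(B₁), twice continuously differentiable on Q_c^+ ∩ B₁ with Δw = w₁₁ + w₂₂ = 0 there, w = 0 on ∂Q_c^+ ∩ B₁, and |w| ≤ 1 on Q_c^+ ∩ B₁, then |w(x)| ≤ C₀|x|^{2+α₀} for all x ∈ Q_c^+ ∩ B_{1/2}. -/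
/-!
Write `α = arccos √(1 - c)`. Since `α < π / 2`, there is an exponent `γ` with
`2 < γ < min 3 (π / α)`, and the harmonic function `V = r ^ γ cos (γ (θ - α / 2))`, the real part
of `e^{-iγα/2} z ^ γ`, satisfies `m r ^ γ ≤ V ≤ r ^ γ` on the sector with
`m = cos (γ α / 2) > 0` (`barV_lower_closure`, `barV_eq`). With `K = 1 / (m (1/2) ^ γ)` the function
`K V` is at least `1` on the part of the circle of radius `1/2` in the closed sector and nonnegative
on the straight sides, so it dominates `±w` on the boundary of the half-size sector; by the maximum
principle (`upper_bound`) it dominates `±w` inside, hence `|w| ≤ K V ≤ K r ^ γ`, that is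
`α₀ = γ - 2`.

The maximum principle is the classical one: `±w - K V + ε |x|²` has positive Laplacian, so one of
its two pure second derivatives is positive, which is impossible at an interior maximum
(`HasSecond.nonpos`). Second derivatives are taken along coordinate lines, so for `V` they come
directly from the complex derivatives of a holomorphic function.
-/

noncomputable section

open Set Metric

/-- The opening angle α_c^+ = arccos √(1−c) of the sector Q_c^+. -/
def alphacp (c : ℝ) : ℝ := Real.arccos (Real.sqrt (1 - c))

/-- The open sector Q_c^+ of opening angle α_c^+. -/
def Qcp (c : ℝ) : Set E2 :=
  {x | ∃ r θ : ℝ, 0 < r ∧ 0 < θ ∧ θ < alphacp c ∧ x 0 = r * Real.cos θ ∧ x 1 = r * Real.sin θ}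

/-! ### The sector in complex coordinates -/

/-- The identification of the plane with `ℂ`. -/
def toC (x : E2) : ℂ := ⟨x 0, x 1⟩

/-- The standard basis vectors of the plane, as complex numbers: `1` and `I`. -/
def dirC (i : Fin 2) : ℂ := toC (EuclideanSpace.single i 1)

lemma toC_eq (x : E2) : toC x = (x 0 : ℂ) + (x 1 : ℂ) * Complex.I :=
  Complex.mk_eq_add_mul_I _ _

lemma continuous_toC : Continuous toC := by
  have : toC = fun x : E2 => (x 0 : ℂ) + (x 1 : ℂ) * Complex.I := funext toC_eq
  rw [this]
  fun_prop

lemma norm_toC (x : E2) : ‖toC x‖ = ‖x‖ := by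
  rw [Complex.norm_eq_sqrt_sq_add_sq, EuclideanSpace.norm_eq]
  simp [toC]

lemma toC_line (x : E2) (i : Fin 2) (t : ℝ) :
    toC (x + t • EuclideanSpace.single i 1) = toC x + t * dirC i := by
  apply Complex.ext <;> simp [toC, dirC]

lemma mem_Qcp_iff {c : ℝ} (hc : c ∈ Set.Ioo (0:ℝ) 1) (x : E2) :
    x ∈ Qcp c ↔ toC x ∈ Complex.slitPlane ∩ Complex.arg ⁻¹' Set.Ioo 0 (alphacp c) := by
  have hα : alphacp c < Real.pi / 2 :=
    Real.arccos_lt_pi_div_two.2 (Real.sqrt_pos.2 (by linarith [hc.2]))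
  constructor
  · rintro ⟨r, θ, hr, h0, h1, hx0, hx1⟩
    have hz : toC x = r * (Complex.cos θ + Complex.sin θ * Complex.I) := by
      rw [toC_eq, hx0, hx1]; push_cast; ring
    have harg : (toC x).arg = θ := by
      rw [hz, Complex.arg_mul_cos_add_sin_mul_I hr]
      constructor <;> linarith [Real.pi_pos]
    refine ⟨?_, by rw [Set.mem_preimage, harg]; exact ⟨h0, h1⟩⟩
    left
    change 0 < x 0
    rw [hx0]
    exact mul_pos hr (Real.cos_pos_of_mem_Ioo ⟨by linarith, by linarith⟩)
  · rintro ⟨hs, h0, h1⟩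
    refine ⟨‖toC x‖, (toC x).arg, norm_pos_iff.2 (Complex.slitPlane_ne_zero hs), h0, h1, ?_, ?_⟩
    · rw [Complex.norm_mul_cos_arg]; rfl
    · rw [Complex.norm_mul_sin_arg]; rfl

lemma isOpen_Qcp {c : ℝ} (hc : c ∈ Set.Ioo (0:ℝ) 1) : IsOpen (Qcp c) := by
  have h : Qcp c = toC ⁻¹' (Complex.slitPlane ∩ Complex.arg ⁻¹' Set.Ioo 0 (alphacp c)) :=
    Set.ext fun x => mem_Qcp_iff hc x
  rw [h]
  refine IsOpen.preimage continuous_toC ?_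
  refine ContinuousOn.isOpen_inter_preimage ?_ Complex.isOpen_slitPlane isOpen_Ioo
  exact fun z hz => (Complex.continuousAt_arg hz).continuousWithinAt

/-! ### The harmonic barrier -/

/-- The complex barrier `e^{-iγα/2} z^γ`. For `z = r e^{iθ}` its real part is
`r^γ cos (γ (θ - α/2))`. -/
def barF (γ α : ℝ) (z : ℂ) : ℂ := z ^ (γ : ℂ) * Complex.exp (-(γ * α / 2 : ℝ) * Complex.I)

/-- The real barrier `r^γ cos (γ (θ - α/2))` on the plane. -/
def barV (γ α : ℝ) (x : E2) : ℝ := (barF γ α (toC x)).re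

lemma barV_eq (γ α : ℝ) (x : E2) (hx : toC x ≠ 0) :
    barV γ α x = ‖x‖ ^ γ * Real.cos (γ * ((toC x).arg - α / 2)) := by
  have hpos : 0 < ‖x‖ := by rw [← norm_toC]; exact norm_pos_iff.2 hx
  unfold barV barF
  rw [Complex.cpow_def_of_ne_zero hx, ← Complex.exp_add, Complex.exp_re, Real.rpow_def_of_pos hpos]
  congr 2
  · simp [Complex.log_re, norm_toC]
  · simp [Complex.log_im]; ring

lemma barV_lower {c γ : ℝ} (hc : c ∈ Set.Ioo (0:ℝ) 1) (hγ : 0 < γ)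
    (hγα : γ * alphacp c < Real.pi) {x : E2} (hx : x ∈ Qcp c) :
    Real.cos (γ * alphacp c / 2) * ‖x‖ ^ γ ≤ barV γ (alphacp c) x := by
  obtain ⟨hs, h0, h1⟩ := (mem_Qcp_iff hc x).1 hx
  rw [barV_eq _ _ _ (Complex.slitPlane_ne_zero hs), mul_comm]
  gcongr
  rw [← Real.cos_abs (γ * (_ - _))]
  apply Real.cos_le_cos_of_nonneg_of_le_pi (abs_nonneg _)
  · have := Real.pi_pos
    linarith
  · rw [abs_mul, abs_of_pos hγ, mul_div_assoc]
    gcongr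
    rw [abs_le]
    constructor <;> linarith

/-- Away from the vertex, the closed sector stays off the branch cut of `z ^ γ`. -/
lemma closure_Qcp_re {c : ℝ} (hc : c ∈ Set.Ioo (0:ℝ) 1) {x : E2} (hx : x ∈ closure (Qcp c)) :
    0 ≤ (toC x).re := by
  have hα : alphacp c < Real.pi / 2 :=
    Real.arccos_lt_pi_div_two.2 (Real.sqrt_pos.2 (by linarith [hc.2]))
  have hcl : IsClosed {x : E2 | 0 ≤ (toC x).re} :=
    isClosed_le continuous_const (Complex.continuous_re.comp continuous_toC)
  refine closure_minimal ?_ hcl hx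
  rintro y ⟨r, θ, hr, h0, h1, hx0, hx1⟩
  change 0 ≤ y 0
  rw [hx0]
  exact (mul_pos hr (Real.cos_pos_of_mem_Ioo ⟨by linarith, by linarith⟩)).le

lemma barV_continuousOn {c γ : ℝ} (hc : c ∈ Set.Ioo (0:ℝ) 1) (hγ : 0 < γ) :
    ContinuousOn (barV γ (alphacp c)) (closure (Qcp c)) := by
  intro x hx
  apply ContinuousAt.continuousWithinAt
  have h1 : ContinuousAt (fun z : ℂ => z ^ (γ : ℂ)) (toC x) :=
    Complex.continuousAt_cpow_const_of_re_pos (Or.inl (closure_Qcp_re hc hx)) (by simpa using hγ)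
  have h2 : ContinuousAt (barF γ (alphacp c)) (toC x) := h1.mul continuousAt_const
  exact Complex.continuous_re.continuousAt.comp
    (ContinuousAt.comp (f := toC) h2 continuous_toC.continuousAt)

lemma barV_lower_closure {c γ : ℝ} (hc : c ∈ Set.Ioo (0:ℝ) 1) (hγ : 0 < γ)
    (hγα : γ * alphacp c < Real.pi) {x : E2} (hx : x ∈ closure (Qcp c)) :
    Real.cos (γ * alphacp c / 2) * ‖x‖ ^ γ ≤ barV γ (alphacp c) x := by
  refine ContinuousWithinAt.closure_le hx (f := fun x : E2 => Real.cos (γ * alphacp c / 2) * ‖x‖ ^ γ)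
    ?_ ((barV_continuousOn hc hγ x hx).mono subset_closure)
    fun y hy => barV_lower hc hγ hγα hy
  have : Continuous fun x : E2 => Real.cos (γ * alphacp c / 2) * ‖x‖ ^ γ :=
    continuous_const.mul (continuous_norm.rpow_const fun _ => Or.inr hγ.le)
  exact this.continuousWithinAt

/-! ### Second derivatives along coordinate lines -/

/-- `f` has second derivative `a` at `x` along the `i`-th coordinate direction: the restriction of
`f` to the line is differentiable near `x`, and its derivative `g'` is differentiable at `x`. -/
def HasSecond (f : E2 → ℝ) (i : Fin 2) (x : E2) (a : ℝ) : Prop :=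
  ∃ g' : ℝ → ℝ,
    (∀ᶠ t in nhds (0:ℝ), HasDerivAt (fun t : ℝ => f (x + t • EuclideanSpace.single i 1)) (g' t) t) ∧
    HasDerivAt g' a 0

lemma HasSecond.add {f g : E2 → ℝ} {i : Fin 2} {x : E2} {a b : ℝ}
    (hf : HasSecond f i x a) (hg : HasSecond g i x b) : HasSecond (fun y => f y + g y) i x (a + b) := by
  obtain ⟨f', h1, h2⟩ := hf
  obtain ⟨g', h3, h4⟩ := hg
  refine ⟨fun t => f' t + g' t, ?_, h2.add h4⟩
  filter_upwards [h1, h3] with t ht hs using ht.add hs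

lemma HasSecond.const_mul {f : E2 → ℝ} {i : Fin 2} {x : E2} {a : ℝ}
    (hf : HasSecond f i x a) (k : ℝ) : HasSecond (fun y => k * f y) i x (k * a) := by
  obtain ⟨f', h1, h2⟩ := hf
  refine ⟨fun t => k * f' t, ?_, h2.const_mul k⟩
  filter_upwards [h1] with t ht using ht.const_mul k

/-- If the second derivative at a local maximum were positive, the second derivative test would
make the point a local minimum too, so the function would be locally constant. -/
lemma HasSecond.nonpos {f : E2 → ℝ} {i : Fin 2} {x : E2} {a : ℝ}
    (hf : HasSecond f i x a) (hm : IsLocalMax f x) : a ≤ 0 := by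
  obtain ⟨g', h1, h2⟩ := hf
  set g : ℝ → ℝ := fun t => f (x + t • EuclideanSpace.single i 1) with hg
  by_contra! ha
  have hcont : Continuous fun t : ℝ => x + t • (EuclideanSpace.single i 1 : E2) := by fun_prop
  have hmax : IsLocalMax g 0 := by
    have hm' : IsLocalMax f (x + (0:ℝ) • (EuclideanSpace.single i 1 : E2)) := by simpa using hm
    exact hm'.comp_continuous (g := fun t : ℝ => x + t • (EuclideanSpace.single i 1 : E2))
      hcont.continuousAt
  have hde : deriv g =ᶠ[nhds 0] g' := h1.mono fun t ht => ht.deriv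
  have hdd : deriv (deriv g) 0 = a := by rw [hde.deriv_eq, h2.deriv]
  have hmin : IsLocalMin g 0 :=
    isLocalMin_of_deriv_deriv_pos (by rw [hdd]; exact ha) hmax.deriv_eq_zero
      h1.self_of_nhds.continuousAt
  have hconst : g =ᶠ[nhds 0] fun _ => g 0 := by
    filter_upwards [hmax, hmin] with t ht hs using le_antisymm ht hs
  have hzero : deriv (deriv g) 0 = 0 := by
    rw [hconst.deriv.deriv_eq]; simp
  linarith

lemma hasDerivAt_line (x : E2) (i : Fin 2) (t : ℝ) :
    HasDerivAt (fun t : ℝ => x + t • (EuclideanSpace.single i 1 : E2))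
      (EuclideanSpace.single i 1) t := by
  simpa using ((hasDerivAt_id t).smul_const (EuclideanSpace.single i 1 : E2)).const_add x

lemma hasSecond_of_contDiffOn {w : E2 → ℝ} {U : Set E2} (hU : IsOpen U) (hw : ContDiffOn ℝ 2 w U)
    {x : E2} (hx : x ∈ U) (i : Fin 2) : HasSecond w i x (pd2 i i w x) := by
  refine ⟨fun t => pd i w (x + t • EuclideanSpace.single i 1), ?_, ?_⟩
  · have hcont : Continuous fun t : ℝ => x + t • (EuclideanSpace.single i 1 : E2) := by fun_prop
    have hev : ∀ᶠ t in nhds (0:ℝ), x + t • (EuclideanSpace.single i 1 : E2) ∈ U :=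
      hcont.continuousAt.eventually_mem (by simpa using hU.mem_nhds hx)
    filter_upwards [hev] with t ht
    have hd : DifferentiableAt ℝ w (x + t • (EuclideanSpace.single i 1 : E2)) :=
      (hw.contDiffAt (hU.mem_nhds ht)).differentiableAt (by norm_num)
    exact hd.hasFDerivAt.comp_hasDerivAt t (hasDerivAt_line x i t)
  · have hd : DifferentiableAt ℝ (fderiv ℝ w) x :=
      ((hw.contDiffAt (hU.mem_nhds hx)).fderiv_right (m := 1) (by norm_num)).differentiableAt
        (by norm_num)
    have hp : DifferentiableAt ℝ (pd i w) (x + (0:ℝ) • (EuclideanSpace.single i 1 : E2)) := by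
      rw [zero_smul, add_zero]
      exact hd.clm_apply (differentiableAt_const _)
    have := hp.hasFDerivAt.comp_hasDerivAt (0:ℝ) (hasDerivAt_line x i 0)
    rw [zero_smul, add_zero] at this
    exact this

lemma hasSecond_barV (γ α : ℝ) {x : E2} (hx : toC x ∈ Complex.slitPlane) (i : Fin 2) :
    HasSecond (barV γ α) i x ((deriv (deriv (barF γ α)) (toC x) * dirC i * dirC i).re) := by
  have hdF : DifferentiableOn ℂ (barF γ α) Complex.slitPlane := fun z hz =>
    ((differentiableAt_id.cpow_const hz).mul_const _).differentiableWithinAt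
  have hline : ∀ t : ℝ, HasDerivAt (fun t : ℝ => toC x + t * dirC i) (dirC i) t := fun t => by
    simpa using ((Complex.ofRealCLM.hasDerivAt (x := t)).mul_const (dirC i)).const_add (toC x)
  have hcomp : ∀ (G : ℂ → ℂ) (t : ℝ), DifferentiableAt ℂ G (toC x + t * dirC i) →
      HasDerivAt (fun t : ℝ => G (toC x + t * dirC i)) (deriv G (toC x + t * dirC i) * dirC i) t :=
    fun G t hG => hG.hasDerivAt.comp t (hline t)
  have hre : ∀ (G : ℝ → ℂ) (G' : ℂ) (t : ℝ), HasDerivAt G G' t →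
      HasDerivAt (fun t => (G t).re) G'.re t := fun G G' t hG =>
    Complex.reCLM.hasFDerivAt.comp_hasDerivAt t hG
  refine ⟨fun t => (deriv (barF γ α) (toC x + t * dirC i) * dirC i).re, ?_, ?_⟩
  · have hev : ∀ᶠ t : ℝ in nhds 0, toC x + t * dirC i ∈ Complex.slitPlane :=
      (hline 0).continuousAt.eventually_mem (by simpa using Complex.isOpen_slitPlane.mem_nhds hx)
    filter_upwards [hev] with t ht
    have h := hre _ _ _ (hcomp _ t (hdF.differentiableAt (Complex.isOpen_slitPlane.mem_nhds ht)))
    simpa only [barV, toC_line] using h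
  · have hd : DifferentiableAt ℂ (deriv (barF γ α)) (toC x + (0:ℝ) * dirC i) := by
      simpa using (hdF.deriv Complex.isOpen_slitPlane).differentiableAt
        (Complex.isOpen_slitPlane.mem_nhds hx)
    simpa using hre _ _ _ ((hcomp _ 0 hd).mul_const (dirC i))

lemma hasSecond_normSq (x : E2) (i : Fin 2) : HasSecond (fun y => ‖y‖ ^ 2) i x 2 := by
  refine ⟨fun t => 2 * x i + 2 * t, Filter.Eventually.of_forall fun t => ?_, ?_⟩
  · have h : (fun t : ℝ => ‖x + t • (EuclideanSpace.single i 1 : E2)‖ ^ 2) =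
        fun t => ‖x‖ ^ 2 + (2 * x i) * t + t ^ 2 := by
      funext t
      rw [norm_add_sq_real, inner_smul_right, EuclideanSpace.inner_single_right, norm_smul]
      simp; ring
    rw [h]
    have := (((hasDerivAt_id t).const_mul (2 * x i)).const_add (‖x‖ ^ 2)).add (hasDerivAt_pow 2 t)
    exact this.congr_deriv (by simp)
  · simpa using ((hasDerivAt_id (0:ℝ)).const_mul 2).const_add (2 * x i)

/-! ### The comparison principle -/

/-- Comparison of `w` with the barrier on the half-size sector. The functions `L i` are the pure
second derivatives of `w`. Adding `ε |x|²` to `w - K V` makes its Laplacian positive, which excludes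
an interior maximum. -/
lemma upper_bound {c γ K : ℝ} (hc : c ∈ Set.Ioo (0:ℝ) 1) (hγ : 0 < γ)
    (hγα : γ * alphacp c < Real.pi) (hK : 0 < K)
    (hK1 : 1 ≤ K * (Real.cos (γ * alphacp c / 2) * (1 / 2) ^ γ))
    {w : E2 → ℝ} (hcont : ContinuousOn w (closure (Qcp c) ∩ closure (ball (0:E2) 1)))
    {L : Fin 2 → E2 → ℝ}
    (hsec : ∀ x ∈ Qcp c ∩ ball (0:E2) 1, ∀ i, HasSecond w i x (L i x))
    (hlap : ∀ x ∈ Qcp c ∩ ball (0:E2) 1, L 0 x + L 1 x = 0)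
    (hbd : ∀ x ∈ frontier (Qcp c) ∩ ball (0:E2) 1, w x = 0)
    (hle : ∀ x ∈ Qcp c ∩ ball (0:E2) 1, w x ≤ 1)
    {x : E2} (hx : x ∈ Qcp c ∩ ball (0:E2) (1/2)) : w x ≤ K * barV γ (alphacp c) x := by
  by_contra! hlt
  set V := barV γ (alphacp c) with hV
  have hα0 : 0 ≤ alphacp c := Real.arccos_nonneg _
  have hm : 0 < Real.cos (γ * alphacp c / 2) :=
    Real.cos_pos_of_mem_Ioo ⟨by have := Real.pi_pos; have := mul_nonneg hγ.le hα0; linarith,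
      by linarith⟩
  -- With this `ε`, the perturbation is at most `ε / 4` on the half-size sector, too small to move
  -- the maximum to the boundary, where `w - K V ≤ 0`.
  set ε := w x - K * V x with hε
  have hεpos : 0 < ε := by linarith
  set h : E2 → ℝ := fun y => (w y + (-K) * V y) + ε * ‖y‖ ^ 2 with hh
  have hcompact : IsCompact (closure (Qcp c) ∩ closedBall (0:E2) (1/2)) :=
    (isCompact_closedBall _ _).inter_left isClosed_closure
  have hsub : closedBall (0:E2) (1/2) ⊆ ball (0:E2) 1 := closedBall_subset_ball (by norm_num)
  have hcontK : ContinuousOn h (closure (Qcp c) ∩ closedBall (0:E2) (1/2)) := by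
    refine ContinuousOn.add (ContinuousOn.add ?_ (ContinuousOn.mul continuousOn_const ?_)) ?_
    · exact hcont.mono fun y hy => ⟨hy.1, subset_closure (hsub hy.2)⟩
    · exact (barV_continuousOn hc hγ).mono inter_subset_left
    · exact Continuous.continuousOn (by fun_prop)
  have hxK : x ∈ closure (Qcp c) ∩ closedBall (0:E2) (1/2) :=
    ⟨subset_closure hx.1, ball_subset_closedBall hx.2⟩
  obtain ⟨y, hyK, hymax⟩ := hcompact.exists_isMaxOn ⟨x, hxK⟩ hcontK
  have hxy : h x ≤ h y := hymax hxK
  have hbig : ε ≤ h y := by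
    refine le_trans ?_ hxy
    have : 0 ≤ ε * ‖x‖ ^ 2 := by positivity
    simp only [hh]; linarith
  have hynorm : ‖y‖ ≤ 1 / 2 := by simpa using hyK.2
  have hVy := barV_lower_closure hc hγ hγα hyK.1
  have hysq : ε * ‖y‖ ^ 2 ≤ ε * (1 / 4) := by
    have : ‖y‖ ^ 2 ≤ (1 / 2) ^ 2 := by gcongr
    gcongr
    linarith
  have hVy0 : 0 ≤ K * V y :=
    mul_nonneg hK.le (le_trans (mul_nonneg hm.le (Real.rpow_nonneg (norm_nonneg _) _)) hVy)
  have hwpos : K * V y < w y := by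
    have : h y = w y - K * V y + ε * ‖y‖ ^ 2 := by simp only [hh]; ring
    linarith
  have hyQ : y ∈ Qcp c := by
    by_contra hn
    have : y ∈ frontier (Qcp c) := by
      rw [(isOpen_Qcp hc).frontier_eq]; exact ⟨hyK.1, hn⟩
    have := hbd y ⟨this, hsub hyK.2⟩
    linarith
  have hyB1 : y ∈ Qcp c ∩ ball (0:E2) 1 := ⟨hyQ, hsub hyK.2⟩
  have hylt : ‖y‖ < 1 / 2 := by
    refine lt_of_le_of_ne hynorm fun heq => ?_
    have h1 := hle y hyB1
    rw [heq] at hVy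
    have := mul_le_mul_of_nonneg_left hVy hK.le
    linarith
  have hloc : IsLocalMax h y := by
    refine hymax.isLocalMax (Filter.mem_of_superset
      (((isOpen_Qcp hc).inter isOpen_ball).mem_nhds ⟨hyQ, ?_⟩)
      (inter_subset_inter subset_closure (ball_subset_closedBall (x := (0:E2)) (ε := 1/2))))
    simpa using hylt
  have hslit := ((mem_Qcp_iff hc y).1 hyQ).1
  have key : ∀ i, L i y + -K * (deriv (deriv (barF γ (alphacp c))) (toC y) * dirC i * dirC i).re
      + ε * 2 ≤ 0 := fun i =>
    (((hsec y hyB1 i).add ((hasSecond_barV γ (alphacp c) hslit i).const_mul (-K))).add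
      ((hasSecond_normSq y i).const_mul ε)).nonpos hloc
  have k0 := key 0
  have k1 := key 1
  have hl := hlap y hyB1
  have d0 : dirC 0 = 1 := by apply Complex.ext <;> simp [dirC, toC]
  have d1 : dirC 1 = Complex.I := by apply Complex.ext <;> simp [dirC, toC]
  rw [d0, mul_one, mul_one] at k0
  rw [d1, mul_assoc, Complex.I_mul_I, mul_neg_one, Complex.neg_re] at k1
  linarith

/-- Harmonic functions vanishing on the boundary of the acute sector Q_c^+ decay
like |x|^{2+α₀} at the vertex. -/
theorem stmt11 (c : ℝ) (hc : c ∈ Set.Ioo (0:ℝ) 1) :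
    ∃ C₀ > (0:ℝ), ∃ α₀ ∈ Set.Ioo (0:ℝ) 1,
      ∀ w : E2 → ℝ,
        ContinuousOn w (closure (Qcp c) ∩ closure (ball (0:E2) 1)) →
        ContDiffOn ℝ 2 w (Qcp c ∩ ball (0:E2) 1) →
        (∀ x ∈ Qcp c ∩ ball (0:E2) 1, pd2 0 0 w x + pd2 1 1 w x = 0) →
        (∀ x ∈ frontier (Qcp c) ∩ ball (0:E2) 1, w x = 0) →
        (∀ x ∈ Qcp c ∩ ball (0:E2) 1, |w x| ≤ 1) →
        ∀ x ∈ Qcp c ∩ ball (0:E2) (1/2), |w x| ≤ C₀ * ‖x‖ ^ (2 + α₀) := by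
  have hα0 : 0 < alphacp c :=
    Real.arccos_pos.2 (by
      rw [Real.sqrt_lt' one_pos]; linarith [hc.1])
  have hα1 : alphacp c < Real.pi / 2 :=
    Real.arccos_lt_pi_div_two.2 (Real.sqrt_pos.2 (by linarith [hc.2]))
  have hβ : 2 < Real.pi / alphacp c := by rw [lt_div_iff₀ hα0]; linarith
  -- Any exponent strictly between `2` and `min 3 (π / α)` works.
  obtain ⟨γ, hγ2, hγ⟩ := exists_between (lt_min hβ (by norm_num : (2:ℝ) < 3))
  have hγα : γ * alphacp c < Real.pi := (lt_div_iff₀ hα0).1 (hγ.trans_le (min_le_left _ _))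
  have hγ3 : γ < 3 := hγ.trans_le (min_le_right _ _)
  have hγ0 : 0 < γ := by linarith
  have hm : 0 < Real.cos (γ * alphacp c / 2) :=
    Real.cos_pos_of_mem_Ioo ⟨by have := Real.pi_pos; have := mul_pos hγ0 hα0; linarith,
      by linarith⟩
  set K : ℝ := 1 / (Real.cos (γ * alphacp c / 2) * (1 / 2) ^ γ) with hKdef
  have hden : 0 < Real.cos (γ * alphacp c / 2) * (1 / 2 : ℝ) ^ γ := by positivity
  have hK : 0 < K := by positivity
  have hK1 : 1 ≤ K * (Real.cos (γ * alphacp c / 2) * (1 / 2) ^ γ) := by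
    rw [hKdef, one_div_mul_cancel hden.ne']
  refine ⟨K, hK, γ - 2, ⟨by linarith, by linarith⟩, ?_⟩
  intro w hcont hC2 hlap hbd hle x hx
  have hopen : IsOpen (Qcp c ∩ ball (0:E2) 1) := (isOpen_Qcp hc).inter isOpen_ball
  have hsec : ∀ x ∈ Qcp c ∩ ball (0:E2) 1, ∀ i, HasSecond w i x (pd2 i i w x) :=
    fun x hx i => hasSecond_of_contDiffOn hopen hC2 hx i
  have up := upper_bound hc hγ0 hγα hK hK1 hcont (L := fun i x => pd2 i i w x) hsec hlap hbd
    (fun y hy => (abs_le.1 (hle y hy)).2) hx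
  have lo := upper_bound hc hγ0 hγα hK hK1 (w := fun y => -1 * w y) (continuousOn_const.mul hcont)
    (L := fun i x => -1 * pd2 i i w x)
    (fun y hy i => (hsec y hy i).const_mul (-1))
    (fun y hy => by have := hlap y hy; linarith)
    (fun y hy => by rw [hbd y hy, mul_zero])
    (fun y hy => by have := (abs_le.1 (hle y hy)).1; linarith) hx
  have hV : barV γ (alphacp c) x ≤ ‖x‖ ^ γ := by
    rw [barV_eq _ _ _ (Complex.slitPlane_ne_zero ((mem_Qcp_iff hc x).1 hx.1).1)]
    exact mul_le_of_le_one_right (Real.rpow_nonneg (norm_nonneg _) _) (Real.cos_le_one _)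
  have hKV := mul_le_mul_of_nonneg_left hV hK.le
  rw [add_sub_cancel, abs_le]
  constructor <;> linarith
end
end
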